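/- (Linear-independence argument at a root of unity, core of the proof of Theorem 4.6) Let k be a field containing a primitive l-th root of unity ε with l ≥ 1 odd. Let n ≥ 1 and fix c ∈ ℕⁿ. Suppose f : ℕⁿ → k has finite support and satisfies, for every μ ∈ ℕⁿ, Σ_{λ ∈ ℕⁿ} f(λ) · ε^{−λ·(μ+c)} · [μ+c ∣ λ]_ε = 0 in k (the sum is finite since f has finite support; here λ·(μ+c) = Σ_i λ_i(μ_i+c_i) ∈ ℕ, and ε^{−m} means (ε^{−1})^m). Then f(λ) = 0 for all λ ∈ ℕⁿ. -/

import Mathlib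

open Finset

noncomputable section

/-- The field `ℚ(v)` of rational functions over `ℚ`. -/
abbrev K : Type := RatFunc ℚ

/-- The indeterminate `v`. -/
def v : K := RatFunc.X

/-- `[i] = (v^i - v^{-i})/(v - v^{-1})`. -/
def qint (i : ℤ) : K := (v ^ i - v ^ (-i)) / (v - v⁻¹)

/-- `[t]! = [1][2]⋯[t]`. -/
def qfact (t : ℕ) : K := ∏ s ∈ Finset.range t, qint (s + 1)

/-- The Gaussian binomial coefficient `[N ∣ t] = ([N][N-1]⋯[N-t+1])/[t]!`. -/
def qbinom (N : ℤ) (t : ℕ) : K := (∏ s ∈ Finset.range t, qint (N - s)) / qfact t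

/-- The q-trinomial coefficient `[a+b+c ; a, b, c] = [a+b+c]!/([a]![b]![c]!)`. -/
def qtri (a b c : ℕ) : K := qfact (a + b + c) / (qfact a * qfact b * qfact c)

/-- The canonical embedding of `ℤ[v, v⁻¹]` into `ℚ(v)`, sending the Laurent
polynomial `∑ a_m T^m` to `∑ a_m v^m`. -/
def laurentToK (p : LaurentPolynomial ℤ) : K := p.coeff.sum fun m a => (a : K) * v ^ m

/-- Evaluation of an integer Laurent polynomial at an element `ε` of a field `k`
(sending `v ↦ ε`). -/
def laurentEval {k : Type*} [Field k] (ε : k) (p : LaurentPolynomial ℤ) : k :=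
  p.coeff.sum fun m a => (a : k) * ε ^ m

/-!
Put `u = ε⁻¹`. Up to the unit `u ^ t²`, the function `m ↦ ε ^ (-t m) [m ∣ t]_ε` is the Gaussian
binomial coefficient in `q = u²`, normalised to be a polynomial in `q`. Pascal's rule says that
the shift `m ↦ m + 1` acts on these functions triangularly, with eigenvalues `q ^ t`. These are
nonzero, so a combination vanishing for all `m ≥ c` vanishes identically; applied in one coordinate
at a time, this removes the translation by `c`. At `c = 0` the products of Gaussian binomial
coefficients form a unitriangular array for the product order, and are therefore independent.
-/

theorem linearIndependent_of_triangular {R : Type*} [Ring R] {α : Type*} [PartialOrder α]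
    {A : α → α → R} (hA : ∀ i j, ¬ i ≤ j → A i j = 0)
    (hdiag : ∀ i, A i i ∈ nonZeroDivisors R) :
    LinearIndependent R A := by
  rw [linearIndependent_iff]
  intro f hf
  by_contra hne
  obtain ⟨j, hj⟩ := f.support.exists_minimal (Finsupp.support_nonempty_iff.mpr hne)
  have hsum : f.sum (fun i a => a * A i j) = 0 := by
    simpa [Finsupp.linearCombination_apply, Finsupp.sum] using congrFun hf j
  have hsingle : f.sum (fun i a => a * A i j) = f j * A j j := by
    refine Finset.sum_eq_single_of_mem j hj.prop fun i hi hij => ?_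
    simp only [hA i j fun hle => hij (hj.eq_of_le hi hle), mul_zero]
  exact Finsupp.mem_support_iff.mp hj.prop
    ((mul_right_mem_nonZeroDivisors_eq_zero_iff (hdiag j)).mp (hsingle ▸ hsum))

section TriangularEndomorphism

variable {R : Type*} [CommRing R]
variable {M : Type*} [AddCommGroup M] [Module R M] {E : Module.End R M} {φ : ℕ → M} {a : ℕ → R}

theorem sub_smul_mem_span_image_Iio
    (hφ : ∀ t, E (φ t) - a t • φ t ∈ Submodule.span R (φ '' Set.Iio t)) {n : ℕ} {x : M}
    (hx : x ∈ Submodule.span R (φ '' Set.Iio (n + 1))) :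
    E x - a n • x ∈ Submodule.span R (φ '' Set.Iio n) := by
  suffices hle : Submodule.span R (φ '' Set.Iio (n + 1)) ≤
      (Submodule.span R (φ '' Set.Iio n)).comap (E - a n • LinearMap.id) from hle hx
  rw [Submodule.span_le]
  rintro _ ⟨t, ht, rfl⟩
  change E (φ t) - a n • φ t ∈ Submodule.span R (φ '' Set.Iio n)
  rcases (Nat.lt_succ_iff.mp ht).eq_or_lt with rfl | htn
  · exact hφ t
  · have hsplit : E (φ t) - a n • φ t = (E (φ t) - a t • φ t) + (a t - a n) • φ t := by
      rw [sub_smul]; abel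
    rw [hsplit]
    have hmono : φ '' Set.Iio t ⊆ φ '' Set.Iio n := Set.image_mono (Set.Iio_subset_Iio htn.le)
    exact add_mem (Submodule.span_mono hmono (hφ t))
      (Submodule.smul_mem _ _ (Submodule.subset_span ⟨t, htn, rfl⟩))

theorem eq_zero_of_mem_span_image_Iio_of_pow_apply_eq_zero (ha : ∀ t, IsSMulRegular M (a t))
    (hφ : ∀ t, E (φ t) - a t • φ t ∈ Submodule.span R (φ '' Set.Iio t)) {c n : ℕ} {x : M}
    (hx : x ∈ Submodule.span R (φ '' Set.Iio n)) (hc : (E ^ c) x = 0) : x = 0 := by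
  induction n generalizing x with
  | zero => simpa using hx
  | succ n ih =>
    have hcomm : (E ^ c) (E x) = E ((E ^ c) x) := by
      rw [← Module.End.mul_apply, ← pow_succ, pow_succ', Module.End.mul_apply]
    have heigen : E x = a n • x :=
      sub_eq_zero.mp (ih (sub_smul_mem_span_image_Iio hφ hx) (by simp [hcomm, hc]))
    have hpow : ∀ d, (E ^ d) x = a n ^ d • x := by
      intro d
      induction d with
      | zero => simp
      | succ d ihd =>
        rw [pow_succ, Module.End.mul_apply, heigen, map_smul, ihd, smul_smul, pow_succ']
    exact ((ha n).pow c).right_eq_zero_of_smul (hpow c ▸ hc)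

theorem eq_zero_of_mem_span_range_of_pow_apply_eq_zero (ha : ∀ t, IsSMulRegular M (a t))
    (hφ : ∀ t, E (φ t) - a t • φ t ∈ Submodule.span R (φ '' Set.Iio t)) {c : ℕ} {x : M}
    (hx : x ∈ Submodule.span R (Set.range φ)) (hc : (E ^ c) x = 0) : x = 0 := by
  have hmono : Monotone fun n => Submodule.span R (φ '' Set.Iio n) := fun m n hmn =>
    Submodule.span_mono (Set.image_mono (Set.Iio_subset_Iio hmn))
  rw [← Set.image_univ, ← Set.iUnion_Iio, Set.image_iUnion, Submodule.span_iUnion,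
    Submodule.mem_iSup_of_directed _ hmono.directed_le] at hx
  obtain ⟨n, hn⟩ := hx
  exact eq_zero_of_mem_span_image_Iio_of_pow_apply_eq_zero ha hφ hn hc

end TriangularEndomorphism

theorem forall_of_forall_update {ι : Type*} [Finite ι] [DecidableEq ι] {X : ι → Type*}
    {p : (∀ i, X i) → Prop} {S : ∀ i, Set (X i)}
    (hp : ∀ μ i, (∀ x ∈ S i, p (Function.update μ i x)) → p μ)
    (hS : ∀ μ ∈ Set.univ.pi S, p μ) (μ : ∀ i, X i) : p μ := by
  have := Fintype.ofFinite ι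
  suffices ∀ (s : Finset ι) (μ : ∀ i, X i), (∀ j ∉ s, μ j ∈ S j) → p μ from
    this Finset.univ μ (by simp)
  intro s
  induction s using Finset.induction_on with
  | empty => exact fun μ hμ => hS μ fun j _ => hμ j (Finset.notMem_empty j)
  | insert i s _ ih =>
    refine fun μ hμ => hp μ i fun x hx => ih _ fun j hj => ?_
    rcases eq_or_ne j i with rfl | hji
    · rwa [Function.update_self]
    · rw [Function.update_of_ne hji]
      exact hμ j (by simp [hji, hj])

/-- The Gaussian binomial coefficient in its normalisation as a polynomial in `q`, so that `q = 1`
gives `Nat.choose m t`. It is defined by Pascal's rule rather than as a quotient of `q`-factorials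
in order to make sense when `q` is a root of unity. -/
def gaussBinom {R : Type*} [Semiring R] (q : R) : ℕ → ℕ → R
  | _, 0 => 1
  | 0, _ + 1 => 0
  | m + 1, t + 1 => gaussBinom q m t + q ^ (t + 1) * gaussBinom q m (t + 1)

section GaussBinomSemiring

variable {R : Type*} [Semiring R] {q : R}

@[simp]
theorem gaussBinom_zero_right (m : ℕ) : gaussBinom q m 0 = 1 := by
  cases m <;> rfl

theorem gaussBinom_succ_succ (m t : ℕ) :
    gaussBinom q (m + 1) (t + 1) = gaussBinom q m t + q ^ (t + 1) * gaussBinom q m (t + 1) := rfl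

theorem gaussBinom_eq_zero_of_lt {m t : ℕ} (h : m < t) : gaussBinom q m t = 0 := by
  induction m generalizing t with
  | zero =>
    obtain ⟨t, rfl⟩ := Nat.exists_eq_succ_of_ne_zero h.ne'
    rfl
  | succ m ih =>
    obtain ⟨t, rfl⟩ := Nat.exists_eq_succ_of_ne_zero (Nat.ne_zero_of_lt h)
    rw [Nat.succ_eq_add_one, gaussBinom_succ_succ, ih (by lia), ih (by lia), mul_zero, add_zero]

@[simp]
theorem gaussBinom_self (m : ℕ) : gaussBinom q m m = 1 := by
  induction m with
  | zero => rfl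
  | succ m ih => rw [gaussBinom_succ_succ, ih, gaussBinom_eq_zero_of_lt m.lt_succ_self, mul_zero,
      add_zero]

theorem map_gaussBinom {S : Type*} [Semiring S] (g : R →+* S) (m t : ℕ) :
    g (gaussBinom q m t) = gaussBinom (g q) m t := by
  induction m generalizing t with
  | zero => cases t <;> simp [gaussBinom]
  | succ m ih => cases t <;> simp [gaussBinom_succ_succ, ih]

end GaussBinomSemiring

section GaussBinomCommRing

variable {R : Type*} [CommRing R] {q : R}

theorem shift_gaussBinom_sub_smul_mem_span (t : ℕ) :
    LinearMap.funLeft R R Nat.succ (fun m => gaussBinom q m t) -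
        q ^ t • (fun m => gaussBinom q m t) ∈
      Submodule.span R ((fun t m => gaussBinom q m t) '' Set.Iio t) := by
  cases t with
  | zero =>
    convert! Submodule.zero_mem _
    ext m
    simp
  | succ t =>
    refine Submodule.subset_span ⟨t, t.lt_succ_self, ?_⟩
    ext m
    simp [gaussBinom_succ_succ]

theorem eq_zero_of_mem_span_gaussBinom (hq : IsSMulRegular R q) {G : ℕ → R}
    (hG : G ∈ Submodule.span R (Set.range fun t m => gaussBinom q m t)) {c : ℕ}
    (hc : ∀ m ≥ c, G m = 0) : G = 0 := by
  have hshift : ∀ d, (LinearMap.funLeft R R Nat.succ ^ d) G = fun m => G (m + d) := by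
    intro d
    induction d with
    | zero => rfl
    | succ d ih =>
      rw [pow_succ', Module.End.mul_apply, ih]
      ext m
      simp [Nat.succ_add_eq_add_succ]
  refine eq_zero_of_mem_span_range_of_pow_apply_eq_zero (fun t => .pi fun _ => hq.pow t)
    shift_gaussBinom_sub_smul_mem_span hG (c := c) ?_
  rw [hshift]
  exact funext fun m => hc _ (Nat.le_add_left c m)

variable {ι : Type*} [Fintype ι]

theorem linearIndependent_prod_gaussBinom :
    LinearIndependent R fun lam μ : ι → ℕ => ∏ i, gaussBinom q (μ i) (lam i) := by
  refine linearIndependent_of_triangular (fun lam μ hle => ?_) fun lam => by simp [one_mem]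
  obtain ⟨i, hi⟩ := not_forall.mp hle
  exact Finset.prod_eq_zero (Finset.mem_univ i) (gaussBinom_eq_zero_of_lt (not_le.mp hi))

theorem comp_update_mem_span_gaussBinom [DecidableEq ι] {F : (ι → ℕ) → R}
    (hF : F ∈ Submodule.span R
      (Set.range fun lam μ : ι → ℕ => ∏ i, gaussBinom q (μ i) (lam i)))
    (μ : ι → ℕ) (i : ι) :
    F ∘ Function.update μ i ∈ Submodule.span R (Set.range fun t m => gaussBinom q m t) := by
  suffices hle :
      Submodule.span R (Set.range fun lam μ : ι → ℕ => ∏ i, gaussBinom q (μ i) (lam i)) ≤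
      (Submodule.span R (Set.range fun t m => gaussBinom q m t)).comap
        (LinearMap.funLeft R R (Function.update μ i)) from hle hF
  rw [Submodule.span_le]
  rintro _ ⟨lam, rfl⟩
  have hslice : LinearMap.funLeft R R (Function.update μ i)
        (fun μ => ∏ j, gaussBinom q (μ j) (lam j)) =
      (∏ j ∈ Finset.univ.erase i, gaussBinom q (μ j) (lam j)) •
        fun m => gaussBinom q m (lam i) := by
    ext m
    rw [LinearMap.funLeft_apply, ← Finset.prod_erase_mul _ _ (Finset.mem_univ i),
      Function.update_self, Pi.smul_apply, smul_eq_mul]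
    congr 1
    refine Finset.prod_congr rfl fun j hj => ?_
    rw [Function.update_of_ne (Finset.ne_of_mem_erase hj)]
  rw [SetLike.mem_coe, Submodule.mem_comap, hslice]
  exact Submodule.smul_mem _ _ (Submodule.subset_span ⟨lam i, rfl⟩)

theorem eq_zero_of_mem_span_prod_gaussBinom (hq : IsSMulRegular R q) {F : (ι → ℕ) → R}
    (hF : F ∈ Submodule.span R
      (Set.range fun lam μ : ι → ℕ => ∏ i, gaussBinom q (μ i) (lam i)))
    {c : ι → ℕ} (hc : ∀ μ, F (μ + c) = 0) : F = 0 := by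
  classical
  refine funext (forall_of_forall_update (S := fun i => Set.Ici (c i)) (fun μ i hμ => ?_)
    fun μ hμ => ?_)
  · have hslice :=
      eq_zero_of_mem_span_gaussBinom hq (comp_update_mem_span_gaussBinom hF μ i) hμ
    simpa using congrFun hslice (μ i)
  · have hcμ : c ≤ μ := fun i => hμ i (Set.mem_univ i)
    simpa [tsub_add_cancel_of_le hcμ] using hc (μ - c)

theorem linearIndependent_prod_gaussBinom_add (hq : IsSMulRegular R q) (c : ι → ℕ) :
    LinearIndependent R fun lam μ : ι → ℕ => ∏ i, gaussBinom q (μ i + c i) (lam i) := by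
  refine linearIndependent_prod_gaussBinom.map_injOn (LinearMap.funLeft R R (· + c)) ?_
  rw [← LinearMap.disjoint_ker_iff_injOn, Submodule.disjoint_def]
  exact fun F hF hker => eq_zero_of_mem_span_prod_gaussBinom hq hF (congrFun hker)

end GaussBinomCommRing

section LaurentEval

variable {k : Type*} [Field k]

theorem laurentEval_eq_eval₂ (x : kˣ) (p : LaurentPolynomial ℤ) :
    laurentEval (x : k) p = LaurentPolynomial.eval₂ (Int.castRingHom k) x p := by
  induction p using LaurentPolynomial.induction_on' with
  | add p q hp hq =>
    rw [map_add, ← hp, ← hq]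
    exact Finsupp.sum_add_index' (by simp) (by simp [add_mul])
  | C_mul_T n a =>
    rw [LaurentPolynomial.eval₂_C_mul_T, ← LaurentPolynomial.single_eq_C_mul_T, laurentEval,
      AddMonoidAlgebra.coeff_single, Finsupp.sum_single_index (by simp)]
    simp

theorem laurentEval_injective {x : k} (hx : Transcendental ℤ x) :
    Function.Injective (laurentEval x) := by
  obtain ⟨x, rfl⟩ : IsUnit x := .mk0 x fun h => hx (h ▸ isAlgebraic_zero)
  rw [funext (laurentEval_eq_eval₂ x), injective_iff_map_eq_zero]
  intro p hp
  obtain ⟨n, g, hg⟩ := p.exists_T_pow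
  have hgx : Polynomial.aeval (x : k) g = 0 := by
    rw [Polynomial.aeval_def, algebraMap_int_eq, ← LaurentPolynomial.eval₂_toLaurent, hg, map_mul,
      hp, zero_mul]
  rw [transcendental_iff.mp hx g hgx, map_zero] at hg
  exact (LaurentPolynomial.isUnit_T n).mul_left_eq_zero.mp hg.symm

end LaurentEval

theorem v_ne_zero : v ≠ 0 := RatFunc.X_ne_zero

theorem transcendental_v : Transcendental ℤ v :=
  (transcendental_algebraMap_iff (RatFunc.algebraMap_injective ℚ)).mpr
    ((Polynomial.transcendental_X ℚ).restrictScalars Int.cast_injective)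

theorem v_pow_ne_one {n : ℕ} (hn : 0 < n) : v ^ n ≠ 1 := fun h =>
  transcendental_v.pow hn (h ▸ isAlgebraic_one)

theorem qint_natCast_ne_zero {n : ℕ} (hn : 0 < n) : qint n ≠ 0 := by
  have hsub : ∀ {j : ℕ}, 0 < j → v ^ j - v⁻¹ ^ j ≠ 0 := fun {j} hj h => by
    refine v_pow_ne_one (n := j + j) (by lia) ?_
    rw [pow_add]
    nth_rw 2 [sub_eq_zero.mp h]
    rw [← mul_pow, mul_inv_cancel₀ v_ne_zero, one_pow]
  rw [qint, zpow_neg, zpow_natCast, ← inv_pow]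
  exact div_ne_zero (hsub hn) (by simpa using hsub one_pos)

theorem qint_add (a b : ℤ) : qint (a + b) = v ^ b * qint a + v ^ (-a) * qint b := by
  rw [qint, qint, qint, neg_add, zpow_add₀ v_ne_zero, zpow_add₀ v_ne_zero]
  ring

theorem qfact_succ (t : ℕ) : qfact (t + 1) = qfact t * qint (t + 1) :=
  Finset.prod_range_succ _ t

theorem qfact_ne_zero (t : ℕ) : qfact t ≠ 0 :=
  Finset.prod_ne_zero_iff.mpr fun s _ => by exact_mod_cast qint_natCast_ne_zero s.succ_pos

@[simp]
theorem qbinom_zero_right (N : ℤ) : qbinom N 0 = 1 := by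
  simp [qbinom, qfact]

@[simp]
theorem qbinom_zero_succ (t : ℕ) : qbinom 0 (t + 1) = 0 := by
  simp [qbinom, Finset.prod_range_succ', qint]

theorem qbinom_succ_succ (N : ℤ) (t : ℕ) : qbinom (N + 1) (t + 1) =
    v ^ (N - t) * qbinom N t + v ^ (-((t : ℤ) + 1)) * qbinom N (t + 1) := by
  have hfact := qfact_ne_zero t
  have hint : qint (t + 1) ≠ 0 := by exact_mod_cast qint_natCast_ne_zero t.succ_pos
  have hnum : ∏ s ∈ Finset.range (t + 1), qint (N + 1 - s) =
      (∏ s ∈ Finset.range t, qint (N - s)) * qint (t + 1 + (N - t)) := by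
    rw [Finset.prod_range_succ']
    congr 1
    · exact Finset.prod_congr rfl fun s _ => by push_cast; congr 1; ring
    · push_cast; congr 1; ring
  rw [qbinom, qbinom, qbinom, hnum, Finset.prod_range_succ, qint_add, qfact_succ]
  field_simp

theorem qbinom_natCast (m t : ℕ) :
    qbinom m t = v ^ ((t : ℤ) * (m - t)) * gaussBinom (v ^ (-2 : ℤ)) m t := by
  induction m generalizing t with
  | zero => cases t <;> simp [gaussBinom]
  | succ m ih =>
    cases t with
    | zero => simp
    | succ t =>
      rw [Nat.cast_succ, qbinom_succ_succ, ih, ih, gaussBinom_succ_succ, mul_add]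
      simp only [← mul_assoc, ← zpow_natCast, ← zpow_mul, ← zpow_add₀ v_ne_zero]
      push_cast
      ring_nf

/-- The Gaussian binomial coefficient `[m ∣ t]` for `m ∈ ℕ`, as an integer Laurent polynomial in
`v`. The exponents lie in `ℤ`; for `m < t` the second factor vanishes. -/
def gaussLaurent (m t : ℕ) : LaurentPolynomial ℤ :=
  LaurentPolynomial.T ((t : ℤ) * (m - t)) * gaussBinom (LaurentPolynomial.T (-2)) m t

section GaussLaurent

variable {k : Type*} [Field k] {ε : k}

theorem laurentEval_gaussLaurent (hε : ε ≠ 0) (m t : ℕ) :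
    laurentEval ε (gaussLaurent m t) =
      ε ^ ((t : ℤ) * (m - t)) * gaussBinom (ε ^ (-2 : ℤ)) m t := by
  lift ε to kˣ using hε.isUnit
  rw [laurentEval_eq_eval₂, gaussLaurent, map_mul, map_gaussBinom, LaurentPolynomial.eval₂_T,
    LaurentPolynomial.eval₂_T, Units.val_zpow_eq_zpow_val, Units.val_zpow_eq_zpow_val]

theorem eq_gaussLaurent {p : LaurentPolynomial ℤ} {m t : ℕ} (hp : laurentToK p = qbinom m t) :
    p = gaussLaurent m t := by
  have hv : laurentEval v p = laurentEval v (gaussLaurent m t) := by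
    rw [laurentEval_gaussLaurent v_ne_zero, ← qbinom_natCast]
    exact hp
  have htrans := transcendental_v
  -- `RatFunc ℚ` carries two `ℤ`-algebra structures that are not defeq.
  rw [Subsingleton.elim (RatFunc.instAlgebraOfPolynomial ℚ ℤ) (Ring.toIntAlgebra K)] at htrans
  exact laurentEval_injective htrans hv

theorem inv_pow_mul_laurentEval_gaussLaurent (hε : ε ≠ 0) (m t : ℕ) :
    ε⁻¹ ^ (t * m) * laurentEval ε (gaussLaurent m t) =
      ε⁻¹ ^ t ^ 2 * gaussBinom (ε ^ (-2 : ℤ)) m t := by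
  rw [laurentEval_gaussLaurent hε, ← mul_assoc]
  congr 1
  simp only [← zpow_natCast, inv_zpow', ← zpow_add₀ hε]
  push_cast
  ring_nf

theorem inv_pow_sum_mul_prod_laurentEval_gaussLaurent (hε : ε ≠ 0) {ι : Type*} [Fintype ι]
    (m t : ι → ℕ) :
    ε⁻¹ ^ (∑ i, t i * m i) * ∏ i, laurentEval ε (gaussLaurent (m i) (t i)) =
      ε⁻¹ ^ (∑ i, t i ^ 2) * ∏ i, gaussBinom (ε ^ (-2 : ℤ)) (m i) (t i) := by
  simp only [← Finset.prod_pow_eq_pow_sum, ← Finset.prod_mul_distrib,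
    inv_pow_mul_laurentEval_gaussLaurent hε]

end GaussLaurent

theorem root_of_unity_linear_independence_general
    {k : Type*} [Field k] {ε : k} (hε : ε ≠ 0) {ι : Type*} [Fintype ι] (c : ι → ℕ)
    (P : ℤ → ℕ → LaurentPolynomial ℤ)
    (hP : ∀ (N : ℤ) (t : ℕ), laurentToK (P N t) = qbinom N t)
    (f : (ι → ℕ) →₀ k)
    (hf : ∀ μ : ι → ℕ,
      (f.sum fun lam a =>
        a * ε⁻¹ ^ (∑ i, lam i * (μ i + c i)) *
          ∏ i, laurentEval ε (P ((μ i : ℤ) + (c i : ℤ)) (lam i))) = 0) :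
    ∀ lam : ι → ℕ, f lam = 0 := by
  have hq : IsSMulRegular k (ε ^ (-2 : ℤ)) := .of_ne_zero (zpow_ne_zero (-2) hε)
  have hind := linearIndependent_prod_gaussBinom_add hq c
  have hP' : ∀ m t : ℕ, P m t = gaussLaurent m t := fun m t => eq_gaussLaurent (hP m t)
  let w (lam : ι → ℕ) : kˣ := Units.mk0 ε⁻¹ (inv_ne_zero hε) ^ (∑ i, lam i ^ 2)
  have hindw := linearIndependent_iff.mp (hind.units_smul w)
  refine DFunLike.congr_fun (hindw f (funext fun μ => Eq.trans ?_ (hf μ)))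
  rw [Finsupp.linearCombination_apply, Finsupp.sum_apply']
  refine Finsupp.sum_congr fun lam _ => ?_
  simp only [← Nat.cast_add, hP', mul_assoc, inv_pow_sum_mul_prod_laurentEval_gaussLaurent hε]
  simp [w, Units.smul_def]

/-- The linear-independence argument at a root of unity (core of the proof of
Theorem 4.6).  Here `P N t` is the (unique) integer Laurent polynomial representing
the Gaussian binomial coefficient `[N ∣ t]`, and `[μ+c ∣ λ]_ε` is formalized as
`∏ i, laurentEval ε (P (μ i + c i) (λ i))`. -/
theorem root_of_unity_linear_independence
    {k : Type*} [Field k] (l : ℕ) (hl : 1 ≤ l) (hodd : Odd l)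
    (ε : k) (hε : IsPrimitiveRoot ε l)
    (n : ℕ) (hn : 1 ≤ n) (c : Fin n → ℕ)
    (P : ℤ → ℕ → LaurentPolynomial ℤ)
    (hP : ∀ (N : ℤ) (t : ℕ), laurentToK (P N t) = qbinom N t)
    (f : (Fin n → ℕ) →₀ k)
    (hf : ∀ μ : Fin n → ℕ,
      (f.sum fun lam a =>
        a * ε⁻¹ ^ (∑ i, lam i * (μ i + c i)) *
          ∏ i, laurentEval ε (P ((μ i : ℤ) + (c i : ℤ)) (lam i))) = 0) :
    ∀ lam : Fin n → ℕ, f lam = 0 :=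
  root_of_unity_linear_independence_general (hε.ne_zero (Nat.ne_of_gt hl)) c P hP f hf
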